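/- Let σ : ℂ⁴ → ℂ be an entire (everywhere ℂ-analytic) and nowhere vanishing function of the variables (x, α, β, γ). Define the differential operators ∂_a = -∂_β - ∂_γ, ∂_b = ∂_β, ∂_c = ∂_α - ∂_β (where ∂_x, ∂_α, ∂_β, ∂_γ are the partial derivatives in the four coordinates). Then σ satisfies the system ∂_x σ = 0, ∂_c σ = 0, ∂_a(∂_a σ / σ) = 0, ∂_b(∂_a σ / σ) = 0, ∂_b(∂_b σ / σ) = 0 identically on ℂ⁴ if and only if there exist constants μ₀, μ₁, μ₂ ∈ ℂ such that σ(x, α, β, γ) = exp(μ₀ + μ₁·γ + μ₂·(α+β)) for all (x, α, β, γ) ∈ ℂ⁴. -/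

import Mathlib

/-- Partial derivative in the `i`-th coordinate direction on `ℂ⁴`, whose coordinates
`(x, α, β, γ)` are indexed by `0, 1, 2, 3 : Fin 4`. -/
noncomputable def pdx (i : Fin 4) (f : (Fin 4 → ℂ) → ℂ) (p : Fin 4 → ℂ) : ℂ :=
  fderiv ℂ f p (Pi.single i 1)

/-- The operator `∂_a = -∂_β - ∂_γ`. -/
noncomputable def pda (f : (Fin 4 → ℂ) → ℂ) (p : Fin 4 → ℂ) : ℂ := -pdx 2 f p - pdx 3 f p

/-- The operator `∂_b = ∂_β`. -/
noncomputable def pdb (f : (Fin 4 → ℂ) → ℂ) (p : Fin 4 → ℂ) : ℂ := pdx 2 f p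

/-- The operator `∂_c = ∂_α - ∂_β`. -/
noncomputable def pdc (f : (Fin 4 → ℂ) → ℂ) (p : Fin 4 → ℂ) : ℂ := pdx 1 f p - pdx 2 f p

/-!
The logarithmic derivative `ω = dσ/σ` of a nowhere vanishing function is a closed form: the matrix
of derivatives `∂ᵤ (ω v)` is symmetric in `u` and `v`. In the frame `x, a, b, c` the equations
`∂ₓ σ = ∂_c σ = 0` kill the `x` and `c` columns of this matrix, hence also the corresponding rows,
while the remaining three equations kill the `a, b` block. So `ω` is a constant linear form `L` with
`L x = L c = 0`, and `σ` is the exponential of `L` up to a constant factor.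
-/

section LogFDeriv

variable {𝕜 E : Type*} [NontriviallyNormedField 𝕜] [NormedAddCommGroup E] [NormedSpace 𝕜 E]
  {f : E → 𝕜} {p : E}

variable (𝕜) in
/-- The logarithmic derivative `df / f` of a scalar function on a normed space, as a continuous
linear form at each point: the several-variable analogue of `logDeriv`. It is `0` where `f`
vanishes. -/
noncomputable def logFDeriv (f : E → 𝕜) (p : E) : E →L[𝕜] 𝕜 :=
  (f p)⁻¹ • fderiv 𝕜 f p

lemma logFDeriv_apply (f : E → 𝕜) (p v : E) : logFDeriv 𝕜 f p v = fderiv 𝕜 f p v / f p := by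
  simp only [logFDeriv, smul_apply, smul_eq_mul, div_eq_inv_mul]

lemma logFDeriv_apply_eq_zero_iff (hp : f p ≠ 0) {v : E} :
    logFDeriv 𝕜 f p v = 0 ↔ fderiv 𝕜 f p v = 0 := by
  simp only [logFDeriv_apply, div_eq_zero_iff, hp, or_false]

lemma hasFDerivAt_logFDeriv (hf : ContDiffAt 𝕜 2 f p) (hp : f p ≠ 0) :
    HasFDerivAt (logFDeriv 𝕜 f)
      ((f p)⁻¹ • fderiv 𝕜 (fderiv 𝕜 f) p +
        (-(f p ^ 2)⁻¹ • fderiv 𝕜 f p).smulRight (fderiv 𝕜 f p)) p := by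
  have hinv : HasFDerivAt (fun q => (f q)⁻¹) (-(f p ^ 2)⁻¹ • fderiv 𝕜 f p) p :=
    (hasDerivAt_inv hp).comp_hasFDerivAt p (hf.differentiableAt two_ne_zero).hasFDerivAt
  have hfderiv : DifferentiableAt 𝕜 (fderiv 𝕜 f) p :=
    (hf.fderiv_right (m := 1) le_rfl).differentiableAt one_ne_zero
  exact hinv.smul hfderiv.hasFDerivAt

lemma fderiv_logFDeriv_comm [IsRCLikeNormedField 𝕜] (hf : ContDiffAt 𝕜 2 f p) (hp : f p ≠ 0)
    (u v : E) :
    fderiv 𝕜 (logFDeriv 𝕜 f) p u v = fderiv 𝕜 (logFDeriv 𝕜 f) p v u := by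
  have hsymm : IsSymmSndFDerivAt 𝕜 f p := hf.isSymmSndFDerivAt (by simp)
  rw [(hasFDerivAt_logFDeriv hf hp).fderiv]
  simp only [add_apply, smul_apply, ContinuousLinearMap.smulRight_apply, smul_eq_mul, hsymm.eq u v]
  ring

lemma fderiv_fderiv_apply_div (hf : ContDiffAt 𝕜 2 f p) (hp : f p ≠ 0) (u v : E) :
    fderiv 𝕜 (fun q => fderiv 𝕜 f q v / f q) p u = fderiv 𝕜 (logFDeriv 𝕜 f) p u v := by
  simp only [← logFDeriv_apply]
  rw [fderiv_clm_apply (hasFDerivAt_logFDeriv hf hp).differentiableAt (differentiableAt_const v)]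
  simp

end LogFDeriv

lemma eq_zero_of_isSymm_of_frame {𝕜 E : Type*} [NontriviallyNormedField 𝕜]
    [NormedAddCommGroup E] [NormedSpace 𝕜 E] {B : E →L[𝕜] E →L[𝕜] 𝕜}
    (hB : ∀ u v, B u v = B v u) {x a b c : E}
    (hframe : Dense (Submodule.span 𝕜 {x, a, b, c} : Set E))
    (hx : B x = 0) (hc : B c = 0) (haa : B a a = 0) (hba : B b a = 0) (hbb : B b b = 0) :
    B = 0 := by
  have hx' (u : E) : B u x = 0 := by rw [hB, hx, zero_apply]
  have hc' (u : E) : B u c = 0 := by rw [hB, hc, zero_apply]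
  have ha : B a = 0 := ContinuousLinearMap.ext_on hframe <| by
    rintro v (rfl | rfl | rfl | rfl)
    exacts [hx' a, haa, (hB a v).trans hba, hc' a]
  have hb : B b = 0 := ContinuousLinearMap.ext_on hframe <| by
    rintro v (rfl | rfl | rfl | rfl)
    exacts [hx' b, hba, hbb, hc' b]
  refine ContinuousLinearMap.ext_on hframe ?_
  rintro v (rfl | rfl | rfl | rfl)
  exacts [hx, ha, hb, hc]

section Exponential

variable {E : Type*} [NormedAddCommGroup E] [NormedSpace ℂ E] {f : E → ℂ}

lemma logFDeriv_cexp_const_add (μ : ℂ) (L : E →L[ℂ] ℂ) (p : E) :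
    logFDeriv ℂ (fun q => Complex.exp (μ + L q)) p = L := by
  rw [logFDeriv, (L.hasFDerivAt.const_add μ).cexp.fderiv, inv_smul_smul₀ (Complex.exp_ne_zero _)]

lemma eq_mul_cexp_of_logFDeriv_eq (hf : Differentiable ℂ f) (hf₀ : ∀ p, f p ≠ 0)
    {L : E →L[ℂ] ℂ} (hL : ∀ p, logFDeriv ℂ f p = L) (p : E) :
    f p = f 0 * Complex.exp (L p) := by
  have hfderiv (q : E) : fderiv ℂ f q = f q • L := by
    rw [← hL q, logFDeriv, smul_inv_smul₀ (hf₀ q)]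
  have hquot (q : E) : HasFDerivAt (fun r => f r * Complex.exp (-L r)) (0 : E →L[ℂ] ℂ) q := by
    refine ((hf q).hasFDerivAt.fun_mul L.hasFDerivAt.fun_neg.cexp).congr_fderiv ?_
    rw [hfderiv]
    module
  have hconst : f p * Complex.exp (-L p) = f 0 := by
    simpa using is_const_of_fderiv_eq_zero (𝕜 := ℂ) (fun q => (hquot q).differentiableAt)
      (fun q => (hquot q).fderiv) p 0
  rw [← hconst, mul_assoc, ← Complex.exp_add, neg_add_cancel, Complex.exp_zero, mul_one]

lemma forall_logFDeriv_eq_iff (hf : Differentiable ℂ f) (hf₀ : ∀ p, f p ≠ 0) {L : E →L[ℂ] ℂ} :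
    (∀ p, logFDeriv ℂ f p = L) ↔ ∃ μ : ℂ, ∀ p, f p = Complex.exp (μ + L p) := by
  constructor
  · intro hL
    refine ⟨Complex.log (f 0), fun p => ?_⟩
    rw [Complex.exp_add, Complex.exp_log (hf₀ 0), eq_mul_cexp_of_logFDeriv_eq hf hf₀ hL p]
  · rintro ⟨μ, hμ⟩ p
    rw [funext hμ, logFDeriv_cexp_const_add]

theorem stmt10_general (hf : ContDiff ℂ 2 f) (hf₀ : ∀ p, f p ≠ 0) {x a b c : E}
    (hframe : Dense (Submodule.span ℂ {x, a, b, c} : Set E)) :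
    ((∀ p, fderiv ℂ f p x = 0) ∧ (∀ p, fderiv ℂ f p c = 0) ∧
      (∀ p, fderiv ℂ (fun q => fderiv ℂ f q a / f q) p a = 0) ∧
      (∀ p, fderiv ℂ (fun q => fderiv ℂ f q a / f q) p b = 0) ∧
      (∀ p, fderiv ℂ (fun q => fderiv ℂ f q b / f q) p b = 0)) ↔
    ∃ (μ : ℂ) (L : E →L[ℂ] ℂ), L x = 0 ∧ L c = 0 ∧ ∀ p, f p = Complex.exp (μ + L p) := by
  have hdiff : Differentiable ℂ f := hf.differentiable two_ne_zero
  have hdiv (p u v : E) := fderiv_fderiv_apply_div hf.contDiffAt (hf₀ p) u v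
  have hsymm (p u v : E) := fderiv_logFDeriv_comm hf.contDiffAt (hf₀ p) u v
  simp only [hdiv, ← logFDeriv_apply_eq_zero_iff (hf₀ _)]
  constructor
  · rintro ⟨hx, hc, haa, hba, hbb⟩
    have hker {v : E} (hv : ∀ p, logFDeriv ℂ f p v = 0) (p : E) :
        fderiv ℂ (logFDeriv ℂ f) p v = 0 := by
      ext u
      rw [hsymm, ← hdiv]
      simp [← logFDeriv_apply, hv]
    have hconst (p : E) : logFDeriv ℂ f p = logFDeriv ℂ f 0 :=
      is_const_of_fderiv_eq_zero (𝕜 := ℂ)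
        (fun q => (hasFDerivAt_logFDeriv hf.contDiffAt (hf₀ q)).differentiableAt)
        (fun q => eq_zero_of_isSymm_of_frame (hsymm q) hframe (hker hx q) (hker hc q)
          (haa q) (hba q) (hbb q)) p 0
    obtain ⟨μ, hμ⟩ := (forall_logFDeriv_eq_iff hdiff hf₀).1 hconst
    exact ⟨μ, logFDeriv ℂ f 0, hx 0, hc 0, hμ⟩
  · rintro ⟨μ, L, hx, hc, hμ⟩
    have hL : logFDeriv ℂ f = fun _ => L :=
      funext ((forall_logFDeriv_eq_iff hdiff hf₀).2 ⟨μ, hμ⟩)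
    simp [hL, hx, hc]

end Exponential

section Frame

/-- The direction of the operator `∂_a = -∂_β - ∂_γ`. -/
def dirA : Fin 4 → ℂ := -Pi.single 2 1 - Pi.single 3 1

/-- The direction of the operator `∂_c = ∂_α - ∂_β`. -/
def dirC : Fin 4 → ℂ := Pi.single 1 1 - Pi.single 2 1

lemma pda_eq_fderiv (f : (Fin 4 → ℂ) → ℂ) (p : Fin 4 → ℂ) : pda f p = fderiv ℂ f p dirA := by
  rw [pda, pdx, pdx, dirA, map_sub, map_neg]

lemma pdc_eq_fderiv (f : (Fin 4 → ℂ) → ℂ) (p : Fin 4 → ℂ) : pdc f p = fderiv ℂ f p dirC := by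
  rw [pdc, pdx, pdx, dirC, map_sub]

lemma eq_frame_combination (p : Fin 4 → ℂ) :
    p = p 0 • Pi.single 0 1 + -p 3 • dirA + (p 1 + p 2 - p 3) • Pi.single 2 1 + p 1 • dirC := by
  ext i
  fin_cases i <;> simp [dirA, dirC]

lemma span_frame_eq_top :
    Submodule.span ℂ {Pi.single 0 1, dirA, Pi.single 2 1, dirC} =
      (⊤ : Submodule ℂ (Fin 4 → ℂ)) := by
  refine Submodule.eq_top_iff'.2 fun p => ?_
  rw [eq_frame_combination p]
  refine add_mem (add_mem (add_mem ?_ ?_) ?_) ?_ <;>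
    exact Submodule.smul_mem _ _ (Submodule.subset_span (by simp))

lemma dense_span_frame :
    Dense (Submodule.span ℂ {Pi.single 0 1, dirA, Pi.single 2 1, dirC} : Set (Fin 4 → ℂ)) := by
  rw [span_frame_eq_top]
  exact dense_univ

lemma apply_eq_of_annihilates_frame {L : (Fin 4 → ℂ) →L[ℂ] ℂ} (hx : L (Pi.single 0 1) = 0)
    (hc : L dirC = 0) (p : Fin 4 → ℂ) :
    L p = -(L dirA + L (Pi.single 2 1)) * p 3 + L (Pi.single 2 1) * (p 1 + p 2) := by
  conv_lhs => rw [eq_frame_combination p]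
  simp only [map_add, map_smul, hx, hc, smul_eq_mul]
  ring

lemma exists_cexp_annihilating_form_iff {f : (Fin 4 → ℂ) → ℂ} :
    (∃ (μ : ℂ) (L : (Fin 4 → ℂ) →L[ℂ] ℂ), L (Pi.single 0 1) = 0 ∧ L dirC = 0 ∧
      ∀ p, f p = Complex.exp (μ + L p)) ↔
    ∃ μ₀ μ₁ μ₂ : ℂ, ∀ p, f p = Complex.exp (μ₀ + μ₁ * p 3 + μ₂ * (p 1 + p 2)) := by
  constructor
  · rintro ⟨μ, L, hx, hc, hf⟩
    refine ⟨μ, -(L dirA + L (Pi.single 2 1)), L (Pi.single 2 1), fun p => ?_⟩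
    rw [hf, apply_eq_of_annihilates_frame hx hc, add_assoc]
  · rintro ⟨μ₀, μ₁, μ₂, hf⟩
    let coord (i : Fin 4) : (Fin 4 → ℂ) →L[ℂ] ℂ := ContinuousLinearMap.proj i
    refine ⟨μ₀, μ₁ • coord 3 + μ₂ • (coord 1 + coord 2), ?_, ?_, fun p => ?_⟩
    · simp [coord]
    · simp [coord, dirC]
    · simp [coord, hf, mul_add, add_assoc]

end Frame

/-- An entire nowhere-vanishing function `σ(x,α,β,γ)` satisfies the system
`∂ₓσ = 0`, `∂_c σ = 0`, `∂_a(∂_a σ/σ) = 0`, `∂_b(∂_a σ/σ) = 0`, `∂_b(∂_b σ/σ) = 0`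
identically if and only if `σ = exp(μ₀ + μ₁γ + μ₂(α+β))` for some constants `μ₀,μ₁,μ₂ ∈ ℂ`. -/
theorem stmt10 (σ : (Fin 4 → ℂ) → ℂ)
    (hσ : AnalyticOnNhd ℂ σ Set.univ) (hnv : ∀ p, σ p ≠ 0) :
    ((∀ p, pdx 0 σ p = 0) ∧ (∀ p, pdc σ p = 0) ∧
     (∀ p, pda (fun q => pda σ q / σ q) p = 0) ∧
     (∀ p, pdb (fun q => pda σ q / σ q) p = 0) ∧
     (∀ p, pdb (fun q => pdb σ q / σ q) p = 0)) ↔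
    ∃ μ₀ μ₁ μ₂ : ℂ, ∀ p, σ p = Complex.exp (μ₀ + μ₁ * p 3 + μ₂ * (p 1 + p 2)) := by
  simp only [pda_eq_fderiv, pdc_eq_fderiv, pdb, pdx]
  exact (stmt10_general hσ.contDiff hnv dense_span_frame).trans exists_cexp_annihilating_form_iff
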